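/- arXiv:2507.03692 — 2 statements merged into one kernel-verified Lean document; each statement's English description precedes it below -/
import Mathlib

section
/- Let k ≥ 1, let 0 ≤ ε < 1/3, and let D0 and D1 be probability distributions on {0,1}^n that are ε-almost k-wise equal. Fix an adaptive k-query strategy on {0,1}^n with transcript map Z. For each z ∈ {0,1}^k let ρ_z be an N×N density matrix, and let Π_o and Π_p be N×N projections with Π_o ≤ Π_p. For b ∈ {0,1} and s ∈ {o, p}, set p_{b,s} = Σ_{z ∈ {0,1}^k} Pr_{x∼D_b}[Z(x) = z] · Tr(Π_s ρ_z), and assume p_{0,p} > 0 and p_{1,p} > 0. Then it is not the case that both p_{0,o}/p_{0,p} ≤ 1/3 and p_{1,o}/p_{1,p} ≥ 2/3. (Consequently, no algorithm that makes k classical queries to the input and then postselects via Π_p and accepts via Π_o can distinguish D0 from D1 with bounded error.) -/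
open ComplexOrder

/-- `D` is a probability distribution on `{0,1}^n`. -/
def IsDistribution {n : ℕ} (D : (Fin n → Bool) → ℝ) : Prop :=
  (∀ x, 0 ≤ D x) ∧ ∑ x, D x = 1

/-- Expectation of `g` under the distribution `D`. -/
def expect {n : ℕ} (D : (Fin n → Bool) → ℝ) (g : (Fin n → Bool) → ℝ) : ℝ :=
  ∑ x, D x * g x

/-- A `k`-term is described by a list of `k` pairs `(i, b)`; the factor corresponding
to `(i, true)` is `z i` and the one corresponding to `(i, false)` is `1 - z i`.
On Boolean inputs, each factor is the indicator that `z i = b`. -/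
def termEval {n : ℕ} (L : List (Fin n × Bool)) (z : Fin n → Bool) : ℝ :=
  (L.map (fun p => if z p.1 = p.2 then (1 : ℝ) else 0)).prod

/-- `D0` and `D1` are `ε`-almost `k`-wise equal:
for every `k`-term `C`, `(1 - ε) E_{D1}[C] ≤ E_{D0}[C] ≤ (1 + ε) E_{D1}[C]`. -/
def AlmostKWiseEqual {n : ℕ} (k : ℕ) (ε : ℝ) (D0 D1 : (Fin n → Bool) → ℝ) : Prop :=
  ∀ L : List (Fin n × Bool), L.length = k →
    (1 - ε) * expect D1 (termEval L) ≤ expect D0 (termEval L) ∧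
    expect D0 (termEval L) ≤ (1 + ε) * expect D1 (termEval L)

/-- `Z` is the transcript map of the adaptive `k`-query strategy `q`:
`Z x j = x (q j (Z x ↾ {0,…,j-1}))`. -/
def IsTranscript {n k : ℕ} (q : (j : Fin k) → (Fin j → Bool) → Fin n)
    (Z : (Fin n → Bool) → Fin k → Bool) : Prop :=
  ∀ x j, Z x j = x (q j (fun i => Z x ⟨i.1, i.2.trans j.2⟩))

/-- `p_{D,s} = Σ_z Pr_{x∼D}[Z(x) = z] · Tr(Π_s ρ_z)`, the (real) probability that the
projection `Ps` succeeds on the state produced after the classical queries, when the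
input is drawn from `D`. -/
noncomputable def postProb {n k N : ℕ} (Z : (Fin n → Bool) → Fin k → Bool)
    (ρ : (Fin k → Bool) → Matrix (Fin N) (Fin N) ℂ)
    (D : (Fin n → Bool) → ℝ) (Ps : Matrix (Fin N) (Fin N) ℂ) : ℝ :=
  ∑ z : Fin k → Bool, (∑ x, D x * (if Z x = z then 1 else 0)) * ((Ps * ρ z).trace).re

/-!
A transcript `z` determines the queries made along it, so the event `Z x = z` is a `k`-term in the
input `x`. Hence each success probability is a combination, with the nonnegative weights
`Tr (P ρ_z)`, of expectations of `k`-terms, and passing from `D1` to `D0` changes it by a factor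
between `1 - ε` and `1 + ε`. Postselected acceptance ratios are thus multiplied by at least
`(1 - ε) / (1 + ε)`, which exceeds `1 / 2` when `ε < 1 / 3`.
-/

section PosSemidef

open scoped Matrix MatrixOrder Matrix.Norms.L2Operator

variable {ι 𝕜 : Type*} [Fintype ι] [RCLike 𝕜] {A B : Matrix ι ι 𝕜}

theorem posSemidef_of_isHermitian_of_isIdempotentElem (hA : A.IsHermitian)
    (hA' : IsIdempotentElem A) : A.PosSemidef :=
  Matrix.nonneg_iff_posSemidef.mp (IsStarProjection.nonneg ⟨hA', hA⟩)

theorem posSemidef_trace_mul_nonneg (hA : A.PosSemidef) (hB : B.PosSemidef) :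
    0 ≤ (A * B).trace := by
  classical
  obtain ⟨C, rfl⟩ := CStarAlgebra.nonneg_iff_eq_star_mul_self.mp hB.nonneg
  calc
    0 ≤ (C * A * Cᴴ).trace := (hA.mul_mul_conjTranspose_same C).trace_nonneg
    _ = (A * (Cᴴ * C)).trace := by rw [Matrix.mul_assoc, Matrix.trace_mul_comm, Matrix.mul_assoc]

end PosSemidef

section Transcript

variable {n k : ℕ}

theorem termEval_eq_ite (L : List (Fin n × Bool)) (x : Fin n → Bool) :
    termEval L x = if ∀ p ∈ L, x p.1 = p.2 then 1 else 0 := by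
  induction L with
  | nil => simp [termEval]
  | cons p L ih =>
    simp only [termEval] at ih
    simp only [termEval, List.map_cons, List.prod_cons, ih, List.forall_mem_cons, ite_and, ite_mul,
      one_mul, zero_mul]

/-- The `k`-term describing the event that the strategy `q` receives the answers `z`: its `j`-th
factor asserts that the query made after the first `j` answers of `z` is answered by `z j`. -/
def transcriptTerm (q : (j : Fin k) → (Fin j → Bool) → Fin n) (z : Fin k → Bool) :
    List (Fin n × Bool) :=
  List.ofFn fun j => (q j fun i => z ⟨i, i.2.trans j.2⟩, z j)

theorem length_transcriptTerm (q : (j : Fin k) → (Fin j → Bool) → Fin n) (z : Fin k → Bool) :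
    (transcriptTerm q z).length = k :=
  List.length_ofFn

variable {q : (j : Fin k) → (Fin j → Bool) → Fin n} {Z : (Fin n → Bool) → Fin k → Bool}

theorem IsTranscript.apply_eq_iff (hZ : IsTranscript q Z) {x : Fin n → Bool} {z : Fin k → Bool} :
    Z x = z ↔ ∀ j, x (q j fun i => z ⟨i, i.2.trans j.2⟩) = z j := by
  constructor
  · rintro rfl j
    exact (hZ x j).symm
  · intro h
    funext j
    induction j using WellFoundedLT.induction with
    | ind j ih =>
      have same_prefix : (fun i : Fin j => Z x ⟨i, i.2.trans j.2⟩) =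
          fun i : Fin j => z ⟨i, i.2.trans j.2⟩ :=
        funext fun i : Fin j => ih ⟨i, i.2.trans j.2⟩ i.2
      rw [hZ x j, same_prefix, h j]

theorem IsTranscript.termEval_transcriptTerm (hZ : IsTranscript q Z) (z : Fin k → Bool)
    (x : Fin n → Bool) : termEval (transcriptTerm q z) x = if Z x = z then 1 else 0 := by
  simp only [termEval_eq_ite, transcriptTerm, List.forall_mem_ofFn_iff, hZ.apply_eq_iff]

theorem IsTranscript.postProb_eq_sum_expect {N : ℕ} (hZ : IsTranscript q Z)
    (ρ : (Fin k → Bool) → Matrix (Fin N) (Fin N) ℂ) (D : (Fin n → Bool) → ℝ)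
    (P : Matrix (Fin N) (Fin N) ℂ) :
    postProb Z ρ D P = ∑ z, expect D (termEval (transcriptTerm q z)) * (P * ρ z).trace.re := by
  simp only [postProb, expect, hZ.termEval_transcriptTerm]

theorem AlmostKWiseEqual.postProb_bounds {N : ℕ} {ε : ℝ} {D0 D1 : (Fin n → Bool) → ℝ}
    (hD : AlmostKWiseEqual k ε D0 D1) (hZ : IsTranscript q Z)
    {ρ : (Fin k → Bool) → Matrix (Fin N) (Fin N) ℂ} (hρ : ∀ z, (ρ z).PosSemidef)
    {P : Matrix (Fin N) (Fin N) ℂ} (hP : P.PosSemidef) :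
    (1 - ε) * postProb Z ρ D1 P ≤ postProb Z ρ D0 P ∧
      postProb Z ρ D0 P ≤ (1 + ε) * postProb Z ρ D1 P := by
  have weight_nonneg (z) : 0 ≤ (P * ρ z).trace.re :=
    (Complex.le_def.mp (posSemidef_trace_mul_nonneg hP (hρ z))).1
  have term_bounds (z) := hD (transcriptTerm q z) (length_transcriptTerm q z)
  simp only [hZ.postProb_eq_sum_expect, Finset.mul_sum, ← mul_assoc]
  exact ⟨Finset.sum_le_sum fun z _ =>
      mul_le_mul_of_nonneg_right (term_bounds z).1 (weight_nonneg z),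
    Finset.sum_le_sum fun z _ =>
      mul_le_mul_of_nonneg_right (term_bounds z).2 (weight_nonneg z)⟩

end Transcript

theorem no_classical_query_postselection_distinguisher_general
    {n k N : ℕ} {ε a b : ℝ} (hε : ε ≤ 1) (ha : 0 ≤ a) (hab : (1 + ε) * a < (1 - ε) * b)
    {D0 D1 : (Fin n → Bool) → ℝ} (hD : AlmostKWiseEqual k ε D0 D1)
    {q : (j : Fin k) → (Fin j → Bool) → Fin n}
    {Z : (Fin n → Bool) → Fin k → Bool} (hZ : IsTranscript q Z)
    {ρ : (Fin k → Bool) → Matrix (Fin N) (Fin N) ℂ} (hρ : ∀ z, (ρ z).PosSemidef)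
    {Po Pp : Matrix (Fin N) (Fin N) ℂ} (hPo : Po.PosSemidef) (hPp : Pp.PosSemidef)
    (h0p : 0 < postProb Z ρ D0 Pp) (h1p : 0 < postProb Z ρ D1 Pp) :
    ¬(postProb Z ρ D0 Po / postProb Z ρ D0 Pp ≤ a ∧
      b ≤ postProb Z ρ D1 Po / postProb Z ρ D1 Pp) := by
  rintro ⟨h0, h1⟩
  rw [div_le_iff₀ h0p] at h0
  rw [le_div_iff₀ h1p] at h1
  refine lt_irrefl (postProb Z ρ D0 Po) ?_
  calc
    postProb Z ρ D0 Po ≤ a * postProb Z ρ D0 Pp := h0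
    _ ≤ a * ((1 + ε) * postProb Z ρ D1 Pp) :=
      mul_le_mul_of_nonneg_left (hD.postProb_bounds hZ hρ hPp).2 ha
    _ = (1 + ε) * a * postProb Z ρ D1 Pp := by ring
    _ < (1 - ε) * b * postProb Z ρ D1 Pp := mul_lt_mul_of_pos_right hab h1p
    _ = (1 - ε) * (b * postProb Z ρ D1 Pp) := by ring
    _ ≤ (1 - ε) * postProb Z ρ D1 Po := mul_le_mul_of_nonneg_left h1 (sub_nonneg.mpr hε)
    _ ≤ postProb Z ρ D0 Po := (hD.postProb_bounds hZ hρ hPo).1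

/-- No algorithm making `k` classical (adaptive) queries and then
postselecting via `Pp` and accepting via `Po` can distinguish two `ε`-almost `k`-wise
equal distributions with bounded error, when `0 ≤ ε < 1/3`. -/
theorem no_classical_query_postselection_distinguisher
    {n k N : ℕ} (hk : 1 ≤ k) (ε : ℝ) (hε0 : 0 ≤ ε) (hε : ε < 1/3)
    (D0 D1 : (Fin n → Bool) → ℝ)
    (hD0 : IsDistribution D0) (hD1 : IsDistribution D1)
    (hD : AlmostKWiseEqual k ε D0 D1)
    (q : (j : Fin k) → (Fin j → Bool) → Fin n)
    (Z : (Fin n → Bool) → Fin k → Bool) (hZ : IsTranscript q Z)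
    (ρ : (Fin k → Bool) → Matrix (Fin N) (Fin N) ℂ)
    (hρ : ∀ z, (ρ z).PosSemidef ∧ (ρ z).trace = 1)
    (Po Pp : Matrix (Fin N) (Fin N) ℂ)
    (hPo : Po.IsHermitian ∧ Po * Po = Po)
    (hPp : Pp.IsHermitian ∧ Pp * Pp = Pp)
    (hle : (Pp - Po).PosSemidef)
    (h0p : 0 < postProb Z ρ D0 Pp) (h1p : 0 < postProb Z ρ D1 Pp) :
    ¬(postProb Z ρ D0 Po / postProb Z ρ D0 Pp ≤ 1/3 ∧
      2/3 ≤ postProb Z ρ D1 Po / postProb Z ρ D1 Pp) :=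
  no_classical_query_postselection_distinguisher_general (by linarith) (by norm_num)
    (by linarith) hD hZ (fun z => (hρ z).1)
    (posSemidef_of_isHermitian_of_isIdempotentElem hPo.1 hPo.2)
    (posSemidef_of_isHermitian_of_isIdempotentElem hPp.1 hPp.2) h0p h1p
end

section
/- There is a constant C such that for every n ≥ 2, the rational tree degree of the adaptive construction of AND at logarithmic depth satisfies rtdeg_{1/3}(Ada(AND_n, ⌈log₂ n⌉)) ≤ C · (log n)³. -/
/-!
Because biases are clamped, a coin with the affine bias `1 - #{i | x i = 0}` computes `AND_n`
without error. Replacing the leaves of a tree for `f` by branchings into trees for `Ada(f, d)` adds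
degrees and adds errors, since on every input the wrong branch is taken with probability at most
the error of the tree for `f`. Hence `Ada(AND_n, d)` has an exact rational tree of degree `d + 1`,
which is `O(log n)` for `d = ⌈log₂ n⌉`.
-/

/-- The real value of a bit. -/
def bval (b : Bool) : ℝ := if b then 1 else 0

/-- Evaluation of a real multivariate polynomial at a Boolean point. -/
noncomputable def evalB {m : ℕ} (P : MvPolynomial (Fin m) ℝ) (x : Fin m → Bool) : ℝ :=
  MvPolynomial.eval (fun i => bval (x i)) P

/-- Clamp a real number to `[0,1]`. -/
noncomputable def clamp (r : ℝ) : ℝ := max 0 (min 1 r)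

/-- The rational function `P/Q` (with `Q` nonvanishing on the Boolean cube)
`ε`-approximates `f`. -/
def IsRationalApprox {m : ℕ} (ε : ℝ) (f : (Fin m → Bool) → Bool)
    (P Q : MvPolynomial (Fin m) ℝ) : Prop :=
  (∀ x, evalB Q x ≠ 0) ∧ ∀ x, |evalB P x / evalB Q x - bval (f x)| ≤ ε

/-- The rational degree `rdeg_ε(f)`: the minimum of `max(deg P, deg Q)` over rational
functions `P/Q` that `ε`-approximate `f`. -/
noncomputable def rdeg {m : ℕ} (ε : ℝ) (f : (Fin m → Bool) → Bool) : ℕ :=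
  sInf {d | ∃ P Q : MvPolynomial (Fin m) ℝ,
    IsRationalApprox ε f P Q ∧ max P.totalDegree Q.totalDegree ≤ d}

/-- A rational tree: a finite binary tree each of whose nodes is labeled by a rational
function `P/Q` on `{0,1}^m`. -/
inductive RTree (m : ℕ) where
  | leaf (P Q : MvPolynomial (Fin m) ℝ) : RTree m
  | node (P Q : MvPolynomial (Fin m) ℝ) (t0 t1 : RTree m) : RTree m

namespace RTree

/-- All denominators in the tree are nonvanishing on the Boolean cube. -/
def Valid {m : ℕ} : RTree m → Prop
  | leaf _ Q => ∀ x, evalB Q x ≠ 0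
  | node _ Q t0 t1 => (∀ x, evalB Q x ≠ 0) ∧ t0.Valid ∧ t1.Valid

/-- `T.prob x`: the probability that evaluating the rational tree `T` on input `x`
outputs `1`.  At each node one flips a coin with bias the clamped value of the label;
at a leaf the coin value is output, otherwise one moves to the child indexed by it. -/
noncomputable def prob {m : ℕ} : RTree m → (Fin m → Bool) → ℝ
  | leaf P Q, x => clamp (evalB P x / evalB Q x)
  | node P Q t0 t1, x =>
      (1 - clamp (evalB P x / evalB Q x)) * t0.prob x
        + clamp (evalB P x / evalB Q x) * t1.prob x

/-- The degree of a rational tree: the maximum over root-to-leaf paths of the sum of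
the degrees of the labels along the path. -/
def deg {m : ℕ} : RTree m → ℕ
  | leaf P Q => max P.totalDegree Q.totalDegree
  | node P Q t0 t1 => max P.totalDegree Q.totalDegree + max t0.deg t1.deg

end RTree

/-- The rational tree degree `rtdeg_ε(f)`: the minimum degree of a (valid) rational tree
`ε`-approximating `f`. -/
noncomputable def rtdeg {m : ℕ} (ε : ℝ) (f : (Fin m → Bool) → Bool) : ℕ :=
  sInf {d | ∃ T : RTree m, T.Valid ∧ (∀ x, |T.prob x - bval (f x)| ≤ ε) ∧ T.deg ≤ d}

lemma adaSize_succ (n d : ℕ) :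
    n * (2 ^ (d + 1 + 1) - 1) = n + (n * (2 ^ (d + 1) - 1) + n * (2 ^ (d + 1) - 1)) := by
  obtain ⟨p, hp⟩ : ∃ p, 2 ^ (d + 1) = p + 1 :=
    ⟨2 ^ (d + 1) - 1, by have := Nat.one_le_two_pow (n := d + 1); omega⟩
  have h2 : 2 ^ (d + 1 + 1) = 2 * (p + 1) := by rw [pow_succ, hp]; ring
  rw [h2, hp]
  have h3 : 2 * (p + 1) - 1 = 2 * p + 1 := by omega
  have h4 : p + 1 - 1 = p := by omega
  rw [h3, h4]; ring

/-- The adaptive construction `Ada(f, d)`, a Boolean function on `n·(2^{d+1} - 1)` bits: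
`Ada(f,0) = f` and `Ada(f,d)(x,y,z) = Ada(f,d-1)(y)` if `f x = 0`, `= Ada(f,d-1)(z)` if
`f x = 1`. -/
def ada {n : ℕ} (f : (Fin n → Bool) → Bool) :
    (d : ℕ) → (Fin (n * (2 ^ (d + 1) - 1)) → Bool) → Bool
  | 0 => fun w => f (fun i => w ⟨i.1, by simp⟩)
  | d + 1 => fun w =>
      if f (fun i => w ⟨i.1, by have := adaSize_succ n d; have := i.2; omega⟩)
      then ada f d (fun j =>
        w ⟨n + n * (2 ^ (d + 1) - 1) + j.1, by have := adaSize_succ n d; have := j.2; omega⟩)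
      else ada f d (fun j =>
        w ⟨n + j.1, by have := adaSize_succ n d; have := j.2; omega⟩)

/-- The `n`-bit AND function. -/
def ANDb (n : ℕ) : (Fin n → Bool) → Bool := fun x => decide (∀ i, x i = true)

lemma bval_mem_Icc (b : Bool) : bval b ∈ Set.Icc (0 : ℝ) 1 := by
  cases b <;> simp [bval]

lemma clamp_mem_Icc (r : ℝ) : clamp r ∈ Set.Icc (0 : ℝ) 1 :=
  ⟨le_max_left _ _, max_le zero_le_one (min_le_left _ _)⟩

lemma clamp_one_sub_natCast (k : ℕ) : clamp (1 - k) = if k = 0 then 1 else 0 := by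
  split_ifs with hk
  · simp [clamp, hk]
  · have : (1 : ℝ) ≤ k := mod_cast Nat.one_le_iff_ne_zero.mpr hk
    exact max_eq_left ((min_le_right _ _).trans (sub_nonpos.mpr this))

lemma evalB_one {m : ℕ} (x : Fin m → Bool) : evalB 1 x = 1 := map_one _

lemma evalB_rename {m k : ℕ} (e : Fin m → Fin k) (P : MvPolynomial (Fin m) ℝ)
    (x : Fin k → Bool) : evalB (MvPolynomial.rename e P) x = evalB P (x ∘ e) :=
  MvPolynomial.eval_rename _ _ _

lemma abs_mix_sub_le {q a b v ε δ : ℝ} (hq : q ∈ Set.Icc (0 : ℝ) 1) (hqε : q ≤ ε)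
    (ha : |a - v| ≤ δ) (hb : |b - v| ≤ 1) : |(1 - q) * a + q * b - v| ≤ ε + δ := by
  calc |(1 - q) * a + q * b - v| = |(1 - q) * (a - v) + q * (b - v)| := by ring_nf
    _ ≤ (1 - q) * |a - v| + q * |b - v| := by
      refine (abs_add_le _ _).trans_eq ?_
      rw [abs_mul, abs_mul, abs_of_nonneg (sub_nonneg.mpr hq.2), abs_of_nonneg hq.1]
    _ ≤ 1 * δ + ε * 1 :=
      add_le_add (mul_le_mul (sub_le_self 1 hq.1) ha (abs_nonneg _) zero_le_one)
        (mul_le_mul hqε hb (abs_nonneg _) (hq.1.trans hqε))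
    _ = ε + δ := by ring

namespace RTree

variable {m k : ℕ}

/-- `T.Approximates ε f`: the rational tree `T` is valid and `ε`-approximates `f`, as in the
definition of `rtdeg`. -/
def Approximates (T : RTree m) (ε : ℝ) (f : (Fin m → Bool) → Bool) : Prop :=
  T.Valid ∧ ∀ x, |T.prob x - bval (f x)| ≤ ε

lemma Approximates.rtdeg_le_deg {T : RTree m} {ε : ℝ} {f : (Fin m → Bool) → Bool}
    (hT : T.Approximates ε f) : rtdeg ε f ≤ T.deg :=
  Nat.sInf_le ⟨T, hT.1, hT.2, le_rfl⟩

lemma prob_mem_Icc (T : RTree m) (x : Fin m → Bool) : T.prob x ∈ Set.Icc (0 : ℝ) 1 := by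
  induction T with
  | leaf P Q => exact clamp_mem_Icc _
  | node P Q t0 t1 ih0 ih1 =>
    have hp := clamp_mem_Icc (evalB P x / evalB Q x)
    exact convex_Icc 0 1 ih0 ih1 (sub_nonneg.mpr hp.2) hp.1 (sub_add_cancel _ _)

/-- Renaming the variables of a rational tree: on input `x`, the tree `T.rename e` behaves as `T`
does on `x ∘ e`. -/
noncomputable def rename (e : Fin m → Fin k) : RTree m → RTree k
  | leaf P Q => leaf (MvPolynomial.rename e P) (MvPolynomial.rename e Q)
  | node P Q t0 t1 =>
      node (MvPolynomial.rename e P) (MvPolynomial.rename e Q) (t0.rename e) (t1.rename e)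

lemma Valid.rename {T : RTree m} (hT : T.Valid) (e : Fin m → Fin k) : (T.rename e).Valid := by
  induction T with
  | leaf P Q => exact fun x => evalB_rename e Q x ▸ hT _
  | node P Q t0 t1 ih0 ih1 =>
    exact ⟨fun x => evalB_rename e Q x ▸ hT.1 _, ih0 hT.2.1, ih1 hT.2.2⟩

lemma prob_rename (e : Fin m → Fin k) (T : RTree m) (x : Fin k → Bool) :
    (T.rename e).prob x = T.prob (x ∘ e) := by
  induction T with
  | leaf P Q => simp only [rename, prob, evalB_rename]
  | node P Q t0 t1 ih0 ih1 => simp only [rename, prob, evalB_rename, ih0, ih1]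

lemma deg_rename_le (e : Fin m → Fin k) (T : RTree m) : (T.rename e).deg ≤ T.deg := by
  induction T with
  | leaf P Q =>
    exact max_le_max (MvPolynomial.totalDegree_rename_le e P)
      (MvPolynomial.totalDegree_rename_le e Q)
  | node P Q t0 t1 ih0 ih1 =>
    exact add_le_add
      (max_le_max (MvPolynomial.totalDegree_rename_le e P) (MvPolynomial.totalDegree_rename_le e Q))
      (max_le_max ih0 ih1)

lemma Approximates.rename {T : RTree m} {ε : ℝ} {f : (Fin m → Bool) → Bool}
    (hT : T.Approximates ε f) (e : Fin m → Fin k) :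
    (T.rename e).Approximates ε fun x => f (x ∘ e) :=
  ⟨hT.1.rename e, fun x => prob_rename e T x ▸ hT.2 (x ∘ e)⟩

/-- Sequential composition of rational trees: evaluate `T`, then continue with `t0` or `t1`
according to the bit that `T` outputs. -/
def branch (T t0 t1 : RTree m) : RTree m :=
  match T with
  | leaf P Q => node P Q t0 t1
  | node P Q s0 s1 => node P Q (s0.branch t0 t1) (s1.branch t0 t1)

lemma Valid.branch {T t0 t1 : RTree m} (hT : T.Valid) (h0 : t0.Valid) (h1 : t1.Valid) :
    (T.branch t0 t1).Valid := by
  induction T with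
  | leaf P Q => exact ⟨hT, h0, h1⟩
  | node P Q s0 s1 ih0 ih1 => exact ⟨hT.1, ih0 hT.2.1, ih1 hT.2.2⟩

lemma prob_branch (T t0 t1 : RTree m) (x : Fin m → Bool) :
    (T.branch t0 t1).prob x = (1 - T.prob x) * t0.prob x + T.prob x * t1.prob x := by
  induction T with
  | leaf P Q => rfl
  | node P Q s0 s1 ih0 ih1 =>
    simp only [branch, prob, ih0, ih1]
    ring

lemma deg_branch (T t0 t1 : RTree m) : (T.branch t0 t1).deg = T.deg + max t0.deg t1.deg := by
  induction T with
  | leaf P Q => rfl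
  | node P Q s0 s1 ih0 ih1 =>
    simp only [branch, deg, ih0, ih1, max_add_add_right, add_assoc]

lemma Approximates.branch {T t0 t1 : RTree m} {ε δ : ℝ} {f g0 g1 : (Fin m → Bool) → Bool}
    (hT : T.Approximates ε f) (h0 : t0.Approximates δ g0) (h1 : t1.Approximates δ g1) :
    (T.branch t0 t1).Approximates (ε + δ) fun x => if f x then g1 x else g0 x := by
  refine ⟨hT.1.branch h0.1 h1.1, fun x => ?_⟩
  have hp := T.prob_mem_Icc x
  have hf := hT.2 x
  have wrong_branch (t : RTree m) (b : Bool) : |t.prob x - bval b| ≤ 1 :=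
    Real.dist_le_of_mem_Icc_01 (t.prob_mem_Icc x) (bval_mem_Icc b)
  rw [prob_branch]
  cases hfx : f x with
  | false =>
    have hpε : T.prob x ≤ ε := by
      simpa [hfx, bval] using (le_abs_self _).trans hf
    simpa [hfx] using abs_mix_sub_le hp hpε (h0.2 x) (wrong_branch t1 (g0 x))
  | true =>
    have hpε : 1 - T.prob x ≤ ε := by
      simpa [hfx, bval] using (neg_le_abs _).trans hf
    have hq : 1 - T.prob x ∈ Set.Icc (0 : ℝ) 1 := ⟨sub_nonneg.mpr hp.2, sub_le_self 1 hp.1⟩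
    simpa [hfx, add_comm] using abs_mix_sub_le hq hpε (h1.2 x) (wrong_branch t0 (g1 x))

end RTree

section Ada

variable {n : ℕ}

/-- The position in the input `(x, y, z)` of `Ada(f, d + 1)` of the `i`-th bit of `x`. -/
def selectorIdx (d : ℕ) (i : Fin n) : Fin (n * (2 ^ (d + 1 + 1) - 1)) :=
  ⟨i, by have := adaSize_succ n d; omega⟩

/-- The position in the input `(x, y, z)` of `Ada(f, d + 1)` of the `j`-th bit of `y`. -/
def falseBranchIdx (d : ℕ) (j : Fin (n * (2 ^ (d + 1) - 1))) :
    Fin (n * (2 ^ (d + 1 + 1) - 1)) :=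
  ⟨n + j, by have := adaSize_succ n d; omega⟩

/-- The position in the input `(x, y, z)` of `Ada(f, d + 1)` of the `j`-th bit of `z`. -/
def trueBranchIdx (d : ℕ) (j : Fin (n * (2 ^ (d + 1) - 1))) :
    Fin (n * (2 ^ (d + 1 + 1) - 1)) :=
  ⟨n + n * (2 ^ (d + 1) - 1) + j, by have := adaSize_succ n d; omega⟩

/-- The rational tree for `Ada(f, d)` obtained by running a rational tree `T` for `f` on the
successive selectors. -/
noncomputable def RTree.adaTree (T : RTree n) : (d : ℕ) → RTree (n * (2 ^ (d + 1) - 1))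
  | 0 => T.rename (Fin.cast (by simp))
  | d + 1 => (T.rename (selectorIdx d)).branch
      ((T.adaTree d).rename (falseBranchIdx d)) ((T.adaTree d).rename (trueBranchIdx d))

lemma ada_succ (f : (Fin n → Bool) → Bool) (d : ℕ) :
    ada f (d + 1) = fun w => if f (w ∘ selectorIdx d) then ada f d (w ∘ trueBranchIdx d)
      else ada f d (w ∘ falseBranchIdx d) :=
  rfl

lemma RTree.Approximates.adaTree {T : RTree n} {ε : ℝ} {f : (Fin n → Bool) → Bool}
    (hT : T.Approximates ε f) (d : ℕ) :
    (T.adaTree d).Approximates ((d + 1) * ε) (ada f d) := by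
  induction d with
  | zero =>
    have error_eq : ((0 : ℕ) + 1) * ε = ε := by simp
    rw [error_eq]
    exact hT.rename _
  | succ d ih =>
    have error_eq : ((d + 1 : ℕ) + 1) * ε = ε + (d + 1) * ε := by push_cast; ring
    rw [ada_succ, error_eq]
    exact (hT.rename _).branch (ih.rename _) (ih.rename _)

lemma RTree.deg_adaTree_le (T : RTree n) (d : ℕ) : (T.adaTree d).deg ≤ (d + 1) * T.deg := by
  induction d with
  | zero => exact (deg_rename_le _ T).trans_eq (by ring)
  | succ d ih =>
    calc (T.adaTree (d + 1)).deg ≤ T.deg + (T.adaTree d).deg := by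
          rw [adaTree, deg_branch]
          exact add_le_add (deg_rename_le _ _) (max_le (deg_rename_le _ _) (deg_rename_le _ _))
      _ ≤ T.deg + (d + 1) * T.deg := by gcongr
      _ = (d + 1 + 1) * T.deg := by ring

lemma RTree.Approximates.rtdeg_ada_le {T : RTree n} {ε : ℝ} {f : (Fin n → Bool) → Bool}
    (hT : T.Approximates ε f) (d : ℕ) : rtdeg ((d + 1) * ε) (ada f d) ≤ (d + 1) * T.deg :=
  (hT.adaTree d).rtdeg_le_deg.trans (T.deg_adaTree_le d)

end Ada

/-- The affine polynomial `1 - #{i | x i = 0}`, whose value clamped to `[0,1]` is `AND_n`. -/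
noncomputable def andPoly (n : ℕ) : MvPolynomial (Fin n) ℝ :=
  1 - ∑ i, (1 - MvPolynomial.X i)

lemma totalDegree_andPoly_le (n : ℕ) : (andPoly n).totalDegree ≤ 1 := by
  refine (MvPolynomial.totalDegree_sub _ _).trans (max_le (by simp) ?_)
  refine MvPolynomial.totalDegree_finsetSum_le fun i _ => ?_
  exact (MvPolynomial.totalDegree_sub _ _).trans (by simp)

lemma evalB_andPoly {n : ℕ} (x : Fin n → Bool) :
    evalB (andPoly n) x = 1 - (Finset.univ.filter fun i => x i = false).card := by
  have one_sub_bval (b : Bool) : 1 - bval b = if b = false then 1 else 0 := by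
    cases b <;> simp [bval]
  calc evalB (andPoly n) x = 1 - ∑ i, (1 - bval (x i)) := by
        simp only [evalB, andPoly, map_sub, map_sum, map_one, MvPolynomial.eval_X]
    _ = 1 - (Finset.univ.filter fun i => x i = false).card := by
        simp only [one_sub_bval, Finset.sum_boole]

lemma clamp_evalB_andPoly {n : ℕ} (x : Fin n → Bool) :
    clamp (evalB (andPoly n) x) = bval (ANDb n x) := by
  simp [evalB_andPoly, clamp_one_sub_natCast, bval, ANDb, Finset.filter_eq_empty_iff]

/-- The rational tree for `AND_n` consisting of a single coin with bias `andPoly n`. -/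
noncomputable def andTree (n : ℕ) : RTree n := .leaf (andPoly n) 1

lemma deg_andTree_le (n : ℕ) : (andTree n).deg ≤ 1 := by
  simpa [andTree, RTree.deg] using totalDegree_andPoly_le n

lemma approximates_andTree {ε : ℝ} (hε : 0 ≤ ε) (n : ℕ) :
    (andTree n).Approximates ε (ANDb n) := by
  refine ⟨fun x => ?_, fun x => ?_⟩
  · simp [evalB_one]
  · simp [andTree, RTree.prob, evalB_one, clamp_evalB_andPoly, hε]

lemma rtdeg_ada_ANDb_le {ε : ℝ} (hε : 0 ≤ ε) (n d : ℕ) : rtdeg ε (ada (ANDb n) d) ≤ d + 1 := by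
  have hε' : 0 ≤ ε / (d + 1) := by positivity
  calc rtdeg ε (ada (ANDb n) d) = rtdeg ((d + 1) * (ε / (d + 1))) (ada (ANDb n) d) := by
        rw [mul_div_cancel₀ ε (by positivity)]
    _ ≤ (d + 1) * (andTree n).deg := (approximates_andTree hε' n).rtdeg_ada_le d
    _ ≤ d + 1 := mul_le_of_le_one_right (Nat.zero_le _) (deg_andTree_le n)

lemma one_le_logb {b x : ℝ} (hb : 1 < b) (hx : b ≤ x) : 1 ≤ Real.logb b x := by
  rwa [Real.le_logb_iff_rpow_le hb (zero_lt_one.trans (hb.trans_le hx)), Real.rpow_one]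

lemma logb_le_log_pow_div_log_pow {b x : ℝ} (hb : 1 < b) (hx : b ≤ x) {k : ℕ} (hk : k ≠ 0) :
    Real.logb b x ≤ Real.log x ^ k / Real.log b ^ k := by
  rw [← div_pow]
  exact le_self_pow₀ (one_le_logb hb hx) hk

lemma clog_le_logb_add_one (b n : ℕ) : (Nat.clog b n : ℝ) ≤ Real.logb b n + 1 := by
  rw [← Real.natCeil_logb_natCast]
  have logb_nonneg : 0 ≤ Real.logb b n :=
    div_nonneg (Real.log_natCast_nonneg n) (Real.log_natCast_nonneg b)
  exact (Nat.ceil_lt_add_one logb_nonneg).le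

theorem rtdeg_ada_AND_le_general {ε : ℝ} (hε : 0 ≤ ε) {n : ℕ} (hn : 2 ≤ n) :
    (rtdeg ε (ada (ANDb n) (Nat.clog 2 n)) : ℝ) ≤ 3 * Real.logb 2 n := by
  have hlogb : 1 ≤ Real.logb 2 n := one_le_logb one_lt_two (mod_cast hn)
  have hclog : (Nat.clog 2 n : ℝ) ≤ Real.logb 2 n + 1 := mod_cast clog_le_logb_add_one 2 n
  calc (rtdeg ε (ada (ANDb n) (Nat.clog 2 n)) : ℝ) ≤ Nat.clog 2 n + 1 :=
        mod_cast rtdeg_ada_ANDb_le hε n (Nat.clog 2 n)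
    _ ≤ 3 * Real.logb 2 n := by linarith

/-- There is a constant `C` such that for all `n ≥ 2`,
`rtdeg_{1/3}(Ada(AND_n, ⌈log₂ n⌉)) ≤ C · (log n)³`. -/
theorem rtdeg_ada_AND_le : ∃ C : ℝ, ∀ n : ℕ, 2 ≤ n →
    (rtdeg (1/3) (ada (ANDb n) (Nat.clog 2 n)) : ℝ) ≤ C * (Real.log n) ^ 3 := by
  refine ⟨3 / Real.log 2 ^ 3, fun n hn => (rtdeg_ada_AND_le_general (by norm_num) hn).trans ?_⟩
  rw [div_mul_eq_mul_div, mul_div_assoc]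
  gcongr
  exact logb_le_log_pow_div_log_pow one_lt_two (mod_cast hn) three_ne_zero
end
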